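/- For all integers n ≥ 1 and k ≥ 0 one has (in ℤ): T⁺(n,k) = k·R⁺(n−1,k) + (n−2k+1)·R⁺(n−1,k−1) + T(n−1,k), where terms with second argument −1 vanish. -/

import Mathlib

/-!
Removing the letter `± n` from a signed simsun permutation of rank `n` leaves one of rank `n - 1`,
so the permutations of rank `n` are counted by the admissible insertions of `± n` into each `π` of
rank `n - 1`. This correspondence is `insertTop_bijective`, and by `isSimsun_insertTop` the result
is simsun iff `π` is and the full new word has no double descent.

Let `π` have rank `N = n - 1` and `d` descents. If `π(1) > 0`, then

* `n` can be inserted in `d + 1` slots keeping `d` (the descents and the end of the word) and in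
  `N - 2d` slots raising it to `d + 1` (the ascents not followed by a descent): `sum_insert_max`;
* `-n` can be inserted, not in first position, in `d` slots keeping `d` and in `N - 2d` slots
  raising it to `d + 1` (ascents, or the end, not preceded by a descent): `sum_insert_min`.

If `π(1) < 0`, a permutation with positive first entry arises only by putting `n` first, which is
always admissible and keeps `d`. To end in the odd-signed class, `n` goes into an odd-signed `π` and
`-n` into an even-signed one. So every `π` with `π(1) > 0` contributes `d` insertions with `d`
descents and `N - 2d` with `d + 1` descents, and in addition every odd-signed `π`, whatever the sign
of `π(1)`, contributes one with `d` descents (`sum_insertTop`). Summing over `π` gives the formula.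
-/


open Finset

/-- A signed permutation of rank `n`, encoded as an (unsigned) permutation of
`Fin n` together with a choice of sign for each position: the entry
`π(i+1)` of the word is `±(σ(i)+1)` where the sign is `-` iff `sgn i = true`. -/
abbrev SignedPerm (n : ℕ) := Equiv.Perm (Fin n) × (Fin n → Bool)

/-- The entry `π(j+1)` of the word of a signed permutation. -/
def entry {n : ℕ} (π : SignedPerm n) (j : Fin n) : ℤ :=
  (if π.2 j then -1 else 1) * (((π.1 j : ℕ) : ℤ) + 1)

/-- The word `π(0)π(1)⋯π(n)` of a signed permutation (with the leading `0`). -/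
def word {n : ℕ} (π : SignedPerm n) : List ℤ :=
  0 :: List.ofFn (entry π)

/-- `π(i)` for `0 ≤ i ≤ n` (and `0` outside this range). -/
def wordFn {n : ℕ} (π : SignedPerm n) (i : ℕ) : ℤ :=
  if h : 1 ≤ i ∧ i ≤ n then entry π ⟨i - 1, by omega⟩ else 0

/-- A word has no double descent: no three consecutive strictly decreasing entries. -/
def noDD : List ℤ → Bool
  | a :: b :: c :: rest => (!(decide (b < a) && decide (c < b))) && noDD (b :: c :: rest)
  | _ => true

/-- A signed permutation is simsun if for every `0 ≤ k ≤ n`, deleting the entries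
`±n, …, ±(n-k+1)` (i.e. keeping the entries of absolute value `≤ m := n - k`) from the
word `π(0)π(1)⋯π(n)` leaves a word with no three consecutive strictly decreasing
entries. -/
def IsSimsun {n : ℕ} (π : SignedPerm n) : Prop :=
  ∀ m ≤ n, noDD ((word π).filter (fun a => a.natAbs ≤ m)) = true

instance {n : ℕ} : DecidablePred (IsSimsun (n := n)) := fun _ => by
  unfold IsSimsun; infer_instance

/-- The type-B descent number `des_B(π) = #{0 ≤ i ≤ n-1 : π(i) > π(i+1)}`. -/
def desB {n : ℕ} (π : SignedPerm n) : ℕ :=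
  ((Finset.range n).filter (fun i => wordFn π (i + 1) < wordFn π i)).card

/-- The set of signed simsun permutations of rank `n`. -/
def RB (n : ℕ) : Finset (SignedPerm n) := univ.filter IsSimsun

/-- Signed simsun permutations with `π(1) > 0` (for `n = 0`, the empty permutation
is included, following the convention `R⁺_0 = 1`). -/
def RBp (n : ℕ) : Finset (SignedPerm n) :=
  (RB n).filter (fun π => 0 < wordFn π 1 ∨ n = 0)

/-- Signed simsun permutations with `π(1) < 0`. -/
def RBm (n : ℕ) : Finset (SignedPerm n) :=
  (RB n).filter (fun π => wordFn π 1 < 0)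

/-- A signed permutation is even-signed if its word has an even number of negative entries. -/
def IsEvenSigned {n : ℕ} (π : SignedPerm n) : Prop :=
  (univ.filter (fun j => π.2 j = true)).card % 2 = 0

instance {n : ℕ} : DecidablePred (IsEvenSigned (n := n)) := fun _ => by
  unfold IsEvenSigned; infer_instance

def RD (n : ℕ) : Finset (SignedPerm n) := (RB n).filter IsEvenSigned
def RT (n : ℕ) : Finset (SignedPerm n) := (RB n).filter (fun π => ¬ IsEvenSigned π)
def RDp (n : ℕ) : Finset (SignedPerm n) := (RD n).filter (fun π => 0 < wordFn π 1 ∨ n = 0)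
def RDm (n : ℕ) : Finset (SignedPerm n) := (RD n).filter (fun π => wordFn π 1 < 0)
def RTp (n : ℕ) : Finset (SignedPerm n) := (RT n).filter (fun π => 0 < wordFn π 1 ∨ n = 0)
def RTm (n : ℕ) : Finset (SignedPerm n) := (RT n).filter (fun π => wordFn π 1 < 0)

/-- `R(n,k)`, as an integer, vanishing for `k < 0`. -/
def Rcnt (n : ℕ) (k : ℤ) : ℤ := ((RB n).filter (fun π => (desB π : ℤ) = k)).card
def Rpcnt (n : ℕ) (k : ℤ) : ℤ := ((RBp n).filter (fun π => (desB π : ℤ) = k)).card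
def Rmcnt (n : ℕ) (k : ℤ) : ℤ := ((RBm n).filter (fun π => (desB π : ℤ) = k)).card
def Dcnt (n : ℕ) (k : ℤ) : ℤ := ((RD n).filter (fun π => (desB π : ℤ) = k)).card
def Tcnt (n : ℕ) (k : ℤ) : ℤ := ((RT n).filter (fun π => (desB π : ℤ) = k)).card
def Dpcnt (n : ℕ) (k : ℤ) : ℤ := ((RDp n).filter (fun π => (desB π : ℤ) = k)).card
def Dmcnt (n : ℕ) (k : ℤ) : ℤ := ((RDm n).filter (fun π => (desB π : ℤ) = k)).card
def Tpcnt (n : ℕ) (k : ℤ) : ℤ := ((RTp n).filter (fun π => (desB π : ℤ) = k)).card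
def Tmcnt (n : ℕ) (k : ℤ) : ℤ := ((RTm n).filter (fun π => (desB π : ℤ) = k)).card

/-! ### Insertion into a list without double descents -/

/-- The number of descents of a list of integers. -/
def listDes : List ℤ → ℕ
  | a :: b :: l => (if b < a then 1 else 0) + listDes (b :: l)
  | _ => 0

/-- Whether the list `a :: l` begins with a descent. -/
def startsDesc (a : ℤ) : List ℤ → Bool
  | [] => false
  | b :: _ => decide (b < a)

lemma noDD_cons_cons (a b : ℤ) (l : List ℤ) :
    noDD (a :: b :: l) = (!(decide (b < a) && startsDesc b l) && noDD (b :: l)) := by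
  cases l <;> simp [noDD, startsDesc]

lemma listDes_cons_cons (a b : ℤ) (l : List ℤ) :
    listDes (a :: b :: l) = (if b < a then 1 else 0) + listDes (b :: l) := rfl

lemma startsDesc_cons (a b : ℤ) (l : List ℤ) : startsDesc a (b :: l) = decide (b < a) := rfl

lemma startsDesc_insert_pos {b M : ℤ} {l : List ℤ} (h : startsDesc b l = false) (hM : b < M)
    {p : ℕ} (hp : p ≤ l.length) : startsDesc b (l.insertIdx p M) = false := by
  cases p with
  | zero => simp [startsDesc]; omega
  | succ p =>
    cases l with
    | nil => simp at hp
    | cons c l => simpa [startsDesc] using h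

lemma startsDesc_insert_succ (b M : ℤ) (l : List ℤ) (p : ℕ) :
    startsDesc b (l.insertIdx (p + 1) M) = startsDesc b l := by
  cases l <;> simp [startsDesc]

/-- The ways of inserting a strict maximum `M` somewhere after `a` in `a :: l` without creating a
double descent, weighted by a function `φ` of the descent number. Insertion into a descent or at
the end keeps the number `d` of descents; insertion into an ascent raises it by one, and is
allowed unless the ascent is followed by a descent. Every descent but an initial one is preceded
by an ascent, which leaves `|l| - 2d` ascents, plus one if `a :: l` starts with a descent. -/
lemma sum_insert_max (M : ℤ) : ∀ (l : List ℤ) (a : ℤ) (φ : ℕ → ℤ), a < M → (∀ x ∈ l, x < M) →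
    noDD (a :: l) = true →
    ∑ p ∈ range (l.length + 1),
        (if noDD (a :: l.insertIdx p M) = true then φ (listDes (a :: l.insertIdx p M)) else 0) =
      ((listDes (a :: l) : ℤ) + 1) * φ (listDes (a :: l)) +
        ((l.length : ℤ) - 2 * listDes (a :: l) + (if startsDesc a l = true then 1 else 0)) *
          φ (listDes (a :: l) + 1) := by
  intro l
  induction l with
  | nil =>
    intro a φ ha _ _
    have : ¬ M < a := by omega
    simp [noDD, listDes, startsDesc, this]
  | cons b l ih =>
    intro a φ ha hl hdd
    have hb : b < M := hl b (by simp)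
    have hl' : ∀ x ∈ l, x < M := fun x hx => hl x (by simp [hx])
    rw [noDD_cons_cons] at hdd
    simp only [Bool.and_eq_true, Bool.not_eq_true', Bool.and_eq_false_iff, decide_eq_false_iff_not]
      at hdd
    obtain ⟨h1, h2⟩ := hdd
    have haM : ¬ M < a := by omega
    rw [List.length_cons, Finset.sum_range_succ']
    have key : ∀ p ∈ range (l.length + 1),
        (if noDD (a :: (b :: l).insertIdx (p + 1) M) = true then
          φ (listDes (a :: (b :: l).insertIdx (p + 1) M)) else 0) =
        (if noDD (b :: l.insertIdx p M) = true then
          (fun d => φ ((if b < a then 1 else 0) + d)) (listDes (b :: l.insertIdx p M)) else 0) := by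
      intro p hp
      rw [List.insertIdx_succ_cons, noDD_cons_cons, listDes_cons_cons]
      rcases h1 with h1 | h1
      · simp [h1]
      · rw [startsDesc_insert_pos h1 hb (by simpa [Nat.lt_succ_iff] using hp)]
        simp
    rw [Finset.sum_congr rfl key, ih b (fun d => φ ((if b < a then 1 else 0) + d)) hb hl' h2]
    simp only [List.insertIdx_zero, noDD_cons_cons a M, noDD_cons_cons M b, listDes_cons_cons, h2,
      startsDesc_cons, hb, haM]
    push_cast
    by_cases hba : b < a
    · have h3 : startsDesc b l = false := by simpa [hba] using h1
      simp only [h3, hba]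
      simp
      ring_nf
    · cases h3 : startsDesc b l
      · simp [hba]
        ring_nf
      · simp [hba]
        left
        ring

/-- The ways of inserting a strict minimum `M` in `a :: l` somewhere after the second entry
without creating a double descent, weighted by a function `φ` of the descent number. Insertion
into one of the `d` descents keeps `d`; insertion into an ascent or at the end raises it by one,
and is allowed unless a descent comes directly before. The slot directly after `a` is left out,
whence the corrections when `a :: l` starts with a descent. -/
lemma sum_insert_min (M : ℤ) : ∀ (l : List ℤ) (a : ℤ) (φ : ℕ → ℤ), M < a → (∀ x ∈ l, M < x) →
    noDD (a :: l) = true →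
    ∑ p ∈ range l.length,
        (if noDD (a :: l.insertIdx (p + 1) M) = true then
          φ (listDes (a :: l.insertIdx (p + 1) M)) else 0) =
      ((listDes (a :: l) : ℤ) - (if startsDesc a l = true then 1 else 0)) * φ (listDes (a :: l)) +
        ((l.length : ℤ) - 2 * listDes (a :: l) + (if startsDesc a l = true then 1 else 0)) *
          φ (listDes (a :: l) + 1) := by
  intro l
  induction l with
  | nil =>
    intro a φ ha _ _
    simp [listDes, startsDesc]
  | cons b l ih =>
    intro a φ ha hl hdd
    have hb : M < b := hl b (by simp)
    have hl' : ∀ x ∈ l, M < x := fun x hx => hl x (by simp [hx])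
    rw [noDD_cons_cons] at hdd
    simp only [Bool.and_eq_true, Bool.not_eq_true', Bool.and_eq_false_iff, decide_eq_false_iff_not]
      at hdd
    obtain ⟨h1, h2⟩ := hdd
    rw [List.length_cons, Finset.sum_range_succ']
    have key : ∀ p ∈ range l.length,
        (if noDD (a :: (b :: l).insertIdx (p + 1 + 1) M) = true then
          φ (listDes (a :: (b :: l).insertIdx (p + 1 + 1) M)) else 0) =
        (if noDD (b :: l.insertIdx (p + 1) M) = true then
          (fun d => φ ((if b < a then 1 else 0) + d)) (listDes (b :: l.insertIdx (p + 1) M))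
          else 0) := by
      intro p hp
      rw [List.insertIdx_succ_cons, noDD_cons_cons, listDes_cons_cons, startsDesc_insert_succ]
      rcases h1 with h1 | h1 <;> simp [h1]
    -- With `M` directly after `b`, the descent `b > M` is new, and it replaces the descent that
    -- `b` may have started.
    have key0 : (if noDD (a :: (b :: l).insertIdx (0 + 1) M) = true then
          φ (listDes (a :: (b :: l).insertIdx (0 + 1) M)) else 0) =
        if b < a then 0 else
          φ (1 + (listDes (b :: l) - if startsDesc b l = true then 1 else 0)) := by
      rw [List.insertIdx_succ_cons, List.insertIdx_zero, noDD_cons_cons, listDes_cons_cons,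
        noDD_cons_cons]
      by_cases hba : b < a
      · simp [hba, startsDesc, hb]
      · cases l with
        | nil => simp [hba, noDD, startsDesc, listDes, hb]
        | cons c l =>
          have hc : M < c := hl' c (by simp)
          have hc' : ¬ c < M := by omega
          rw [noDD_cons_cons] at h2
          simp only [Bool.and_eq_true] at h2
          rw [noDD_cons_cons M c]
          simp only [listDes_cons_cons, startsDesc, hb, hba, hc', h2.2]
          by_cases hcb : c < b <;> simp [hcb]
    rw [Finset.sum_congr rfl key, ih b (fun d => φ ((if b < a then 1 else 0) + d)) hb hl' h2, key0]
    simp only [listDes_cons_cons, startsDesc_cons]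
    have hpos : startsDesc b l = true → 1 ≤ listDes (b :: l) := by
      cases l with
      | nil => simp [startsDesc]
      | cons c l => simp only [startsDesc, decide_eq_true_eq, listDes_cons_cons]; intro h; simp [h]
    push_cast
    by_cases hba : b < a
    · have h3 : startsDesc b l = false := by simpa [hba] using h1
      simp only [h3, hba]
      simp
      ring_nf
    · cases h3 : startsDesc b l
      · simp [hba]
        ring_nf
      · obtain ⟨d, hd⟩ := Nat.exists_eq_add_of_le (hpos h3)
        simp [hba, hd]
        ring_nf

/-! ### Insertion of the largest letter -/

/-- The signed permutation of rank `n + 1` whose word is obtained from that of `π` by inserting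
`n + 1` (for `s = false`) or `-(n + 1)` (for `s = true`) so that it becomes entry `π(p + 1)`. -/
noncomputable def insertTop {n : ℕ} (p : Fin (n + 1)) (s : Bool) (π : SignedPerm n) :
    SignedPerm (n + 1) :=
  (Equiv.ofBijective (Fin.insertNth (α := fun _ => Fin (n + 1)) p (Fin.last n)
      (fun j => (π.1 j).castSucc)) (by
    rw [← Finite.injective_iff_bijective]
    intro i j
    refine Fin.succAboveCases p ?_ (fun i => ?_) i <;> refine Fin.succAboveCases p ?_ (fun j => ?_) j
    · simp
    · simp [(Fin.castSucc_ne_last _).symm]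
    · simp [Fin.castSucc_ne_last]
    · simp),
   Fin.insertNth (α := fun _ => Bool) p s π.2)

lemma insertTop_fst_same {n : ℕ} (p : Fin (n + 1)) (s : Bool) (π : SignedPerm n) :
    (insertTop p s π).1 p = Fin.last n := by simp [insertTop]

lemma insertTop_fst_succAbove {n : ℕ} (p : Fin (n + 1)) (s : Bool) (π : SignedPerm n) (j : Fin n) :
    (insertTop p s π).1 (p.succAbove j) = (π.1 j).castSucc := by simp [insertTop]

lemma insertTop_injective (n : ℕ) : Function.Injective
    (fun x : (Fin (n + 1) × Bool) × SignedPerm n => insertTop x.1.1 x.1.2 x.2) := by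
  rintro ⟨⟨p, s⟩, π⟩ ⟨⟨q, t⟩, ρ⟩ h
  simp only at h
  have hpq : p = q := by
    have h1 := insertTop_fst_same p s π
    rw [h] at h1
    exact (insertTop q t ρ).1.injective (h1.trans (insertTop_fst_same q t ρ).symm)
  subst hpq
  have h2 : π.1 = ρ.1 := by
    ext j
    have h1 := insertTop_fst_succAbove p s π j
    rw [h, insertTop_fst_succAbove] at h1
    simpa using congrArg Fin.val h1.symm
  have h3 := Fin.insertNth_injective2 (α := fun _ => Bool) (congrArg Prod.snd h)
  rw [Prod.ext_iff, Prod.ext_iff, Prod.ext_iff]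
  exact ⟨⟨rfl, h3.1⟩, h2, h3.2⟩

/-- Every signed permutation of rank `n + 1` arises from exactly one insertion. -/
lemma insertTop_bijective (n : ℕ) : Function.Bijective
    (fun x : (Fin (n + 1) × Bool) × SignedPerm n => insertTop x.1.1 x.1.2 x.2) := by
  rw [Fintype.bijective_iff_injective_and_card]
  refine ⟨insertTop_injective n, ?_⟩
  simp [Fintype.card_perm, Nat.factorial_succ, pow_succ]
  ring

/-- The entry `± (n + 1)` added by `insertTop`. -/
def topEntry (n : ℕ) (s : Bool) : ℤ := (if s then -1 else 1) * ((n : ℤ) + 1)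

lemma entry_insertTop {n : ℕ} (p : Fin (n + 1)) (s : Bool) (π : SignedPerm n) :
    entry (insertTop p s π) = Fin.insertNth (α := fun _ => ℤ) p (topEntry n s) (entry π) := by
  funext i
  refine Fin.succAboveCases p ?_ (fun i => ?_) i
  · simp [entry, insertTop, topEntry]
  · simp [entry, insertTop]

lemma ofFn_insertNth {n : ℕ} (p : Fin (n + 1)) (x : ℤ) (f : Fin n → ℤ) :
    List.ofFn (Fin.insertNth (α := fun _ => ℤ) p x f) = (List.ofFn f).insertIdx p x := by
  induction n with
  | zero =>
    obtain rfl := Fin.fin_one_eq_zero p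
    simp
  | succ n ih =>
    refine Fin.cases ?_ (fun p => ?_) p
    · simp [Fin.insertNth_zero']
    · rw [← Fin.cons_self_tail f, Fin.insertNth_succ_cons]
      simp only [List.ofFn_cons, ih, Fin.val_succ, List.insertIdx_succ_cons]

lemma word_insertTop {n : ℕ} (p : Fin (n + 1)) (s : Bool) (π : SignedPerm n) :
    word (insertTop p s π) = 0 :: (List.ofFn (entry π)).insertIdx p (topEntry n s) := by
  rw [word, entry_insertTop, ofFn_insertNth]

lemma entry_ne_zero {n : ℕ} (π : SignedPerm n) (j : Fin n) : entry π j ≠ 0 := by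
  unfold entry; split <;> omega

lemma natAbs_entry_le {n : ℕ} (π : SignedPerm n) (j : Fin n) : (entry π j).natAbs ≤ n := by
  have := (π.1 j).isLt
  unfold entry; split <;> omega

lemma filter_insertIdx_of_neg {f : ℤ → Bool} {x : ℤ} (hx : f x = false) :
    ∀ (l : List ℤ) (p : ℕ), (l.insertIdx p x).filter f = l.filter f
  | l, 0 => by simp [hx]
  | [], p + 1 => by simp
  | a :: l, p + 1 => by
    rw [List.insertIdx_succ_cons, List.filter_cons, List.filter_cons, filter_insertIdx_of_neg hx l p]

lemma filter_word_self {n : ℕ} (π : SignedPerm n) :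
    (word π).filter (fun a => a.natAbs ≤ n) = word π := by
  rw [List.filter_eq_self]
  intro a ha
  simp only [word, List.mem_cons, List.mem_ofFn] at ha
  rcases ha with rfl | ⟨j, rfl⟩
  · simp
  · simpa using natAbs_entry_le π j

/-- The simsun condition is inherited by all restrictions, so only the full word is new. -/
lemma isSimsun_insertTop {n : ℕ} (p : Fin (n + 1)) (s : Bool) (π : SignedPerm n) :
    IsSimsun (insertTop p s π) ↔ IsSimsun π ∧ noDD (word (insertTop p s π)) = true := by
  have hfil : ∀ m ≤ n, (word (insertTop p s π)).filter (fun a => a.natAbs ≤ m) =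
      (word π).filter (fun a => a.natAbs ≤ m) := by
    intro m hm
    rw [word_insertTop, word, List.filter_cons, List.filter_cons, filter_insertIdx_of_neg]
    unfold topEntry
    simp only [decide_eq_false_iff_not]
    split <;> omega
  constructor
  · intro h
    refine ⟨fun m hm => ?_, ?_⟩
    · rw [← hfil m hm]; exact h m (by omega)
    · rw [← filter_word_self]; exact h (n + 1) le_rfl
  · rintro ⟨h, h'⟩ m hm
    rcases Nat.lt_or_ge n m with h1 | h1
    · obtain rfl : m = n + 1 := by omega
      rwa [filter_word_self]
    · rw [hfil m h1]; exact h m h1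

lemma IsSimsun.noDD_word {n : ℕ} {π : SignedPerm n} (h : IsSimsun π) : noDD (word π) = true := by
  rw [← filter_word_self]; exact h n le_rfl

lemma listDes_eq_sum : ∀ (l : List ℤ) (a : ℤ), listDes (a :: l) =
    ∑ i ∈ range l.length, if (a :: l).getD (i + 1) 0 < (a :: l).getD i 0 then 1 else 0
  | [], a => by simp [listDes]
  | b :: l, a => by
    rw [listDes_cons_cons, listDes_eq_sum l b, List.length_cons, Finset.sum_range_succ', add_comm]
    simp

lemma wordFn_eq_getD {n : ℕ} (π : SignedPerm n) (i : ℕ) : wordFn π i = (word π).getD i 0 := by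
  unfold wordFn word
  cases i with
  | zero => simp
  | succ i =>
    by_cases h : i < n
    · have : i + 1 ≤ n := h
      simp [this]
    · have : ¬ i + 1 ≤ n := h
      simp [this]

lemma desB_eq_listDes {n : ℕ} (π : SignedPerm n) : desB π = listDes (word π) := by
  rw [desB, Finset.card_filter]
  simp only [wordFn_eq_getD]
  rw [word, listDes_eq_sum]
  simp

lemma isEvenSigned_insertTop {n : ℕ} (p : Fin (n + 1)) (s : Bool) (π : SignedPerm n) :
    IsEvenSigned (insertTop p s π) ↔ (IsEvenSigned π ↔ s = false) := by
  unfold IsEvenSigned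
  rw [Finset.card_filter, Finset.card_filter, Fin.sum_univ_succAbove _ p]
  simp only [insertTop, Fin.insertNth_apply_same, Fin.insertNth_apply_succAbove]
  cases s <;> simp <;> omega

/-- The sign condition `π(1) > 0`, with the convention that the empty permutation satisfies it. -/
def FirstPos {n : ℕ} (π : SignedPerm n) : Prop := 0 < wordFn π 1 ∨ n = 0

instance {n : ℕ} : DecidablePred (FirstPos (n := n)) := fun _ => by
  unfold FirstPos; infer_instance

lemma firstPos_iff {n : ℕ} (π : SignedPerm n) :
    FirstPos π ↔ startsDesc 0 (List.ofFn (entry π)) = false := by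
  unfold FirstPos
  cases n with
  | zero => simp [startsDesc]
  | succ n =>
    have := entry_ne_zero π 0
    simp [startsDesc, wordFn, List.ofFn_succ]
    omega

lemma firstPos_insertTop_zero {n : ℕ} (s : Bool) (π : SignedPerm n) :
    FirstPos (insertTop 0 s π) ↔ s = false := by
  rw [firstPos_iff, entry_insertTop, ofFn_insertNth]
  cases s
  · simp [startsDesc, topEntry]
    omega
  · simp [startsDesc, topEntry]
    omega

lemma firstPos_insertTop_succ {n : ℕ} (p : Fin n) (s : Bool) (π : SignedPerm n) :
    FirstPos (insertTop p.succ s π) ↔ FirstPos π := by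
  rw [firstPos_iff, firstPos_iff, entry_insertTop, ofFn_insertNth, Fin.val_succ,
    startsDesc_insert_succ]

/-! ### The recurrence -/

/-- For a simsun `π`, the insertions of `± (n + 1)` that land in `RTp (n + 1)`, weighted by a
function `φ` of the descent number. If `π(1) > 0`, an odd-signed `π` admits the insertions of
`n + 1` and an even-signed one those of `-(n + 1)` not in first position; the two counts differ by
`φ (desB π)` only. If `π(1) < 0`, the sole candidate is `n + 1` in first position. -/
lemma sum_insertTop {n : ℕ} (π : SignedPerm n) (hπ : IsSimsun π) (φ : ℕ → ℤ) :
    ∑ s : Bool, ∑ p : Fin (n + 1),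
      (if noDD (word (insertTop p s π)) = true ∧ ¬ IsEvenSigned (insertTop p s π) ∧
          FirstPos (insertTop p s π) then φ (desB (insertTop p s π)) else 0) =
      (if FirstPos π then (desB π : ℤ) * φ (desB π) + ((n : ℤ) - 2 * desB π) * φ (desB π + 1)
        else 0) + (if ¬ IsEvenSigned π then φ (desB π) else 0) := by
  have hdd := hπ.noDD_word
  set l := List.ofFn (entry π) with hl
  have hlen : l.length = n := by simp [hl]
  have hw : word π = 0 :: l := rfl
  have hmem : ∀ x ∈ l, x.natAbs ≤ n := by
    intro x hx
    obtain ⟨j, rfl⟩ := (List.mem_ofFn' _ _).1 hx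
    exact natAbs_entry_le π j
  have hmax := sum_insert_max ((n : ℤ) + 1) l 0 φ (by omega)
    (fun x hx => by have := hmem x hx; omega) hdd
  have hmin := sum_insert_min (-((n : ℤ) + 1)) l 0 φ (by omega)
    (fun x hx => by have := hmem x hx; omega) hdd
  have hfp := firstPos_iff π
  rw [← hl] at hfp
  rw [hlen] at hmax hmin
  simp only [← hw, ← desB_eq_listDes] at hmax hmin
  rw [Fin.sum_univ_eq_sum_range (fun p => if noDD (0 :: l.insertIdx p ((n : ℤ) + 1)) = true then
    φ (listDes (0 :: l.insertIdx p ((n : ℤ) + 1))) else 0) (n + 1) |>.symm] at hmax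
  rw [Fin.sum_univ_eq_sum_range (fun p => if noDD (0 :: l.insertIdx (p + 1) (-((n : ℤ) + 1))) = true
    then φ (listDes (0 :: l.insertIdx (p + 1) (-((n : ℤ) + 1)))) else 0) n |>.symm] at hmin
  rw [Fintype.sum_bool]
  simp only [isEvenSigned_insertTop, desB_eq_listDes (insertTop _ _ _), word_insertTop, ← hl]
  have ht : topEntry n true = -((n : ℤ) + 1) := by simp [topEntry]
  have hf : topEntry n false = (n : ℤ) + 1 := by simp [topEntry]
  rw [ht, hf]
  by_cases hpos : FirstPos π
  · have hs := hfp.1 hpos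
    have hfa : ∀ p : Fin (n + 1), FirstPos (insertTop p false π) := by
      intro p
      refine Fin.cases ?_ (fun p => ?_) p
      · simp [firstPos_insertTop_zero]
      · rwa [firstPos_insertTop_succ]
    by_cases he : IsEvenSigned π
    · simp only [he, hfa, Fin.sum_univ_succ, firstPos_insertTop_zero, firstPos_insertTop_succ]
      simpa [hpos, hs] using hmin
    · simp only [he, hfa]
      simp [hpos, hmax, hs]
      ring
  · have hs : startsDesc 0 l = true := by simpa using mt hfp.2 hpos
    simp only [Fin.sum_univ_succ, firstPos_insertTop_zero, firstPos_insertTop_succ, hpos]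
    -- Only `n + 1` in first position survives; it replaces the initial descent `0 > π(1)` by the
    -- descent `n + 1 > π(1)`, creating no double descent because `0 π(1) π(2)` is not one.
    rw [desB_eq_listDes π]
    rw [hw] at hdd ⊢
    cases hl2 : l with
    | nil => simp [hl2, startsDesc] at hs
    | cons b l' =>
      rw [hl2] at hdd hs hmem
      rw [startsDesc_cons, decide_eq_true_eq] at hs
      have hb : b < (n : ℤ) + 1 := by omega
      have hn : ¬ (n : ℤ) + 1 < 0 := by omega
      rw [noDD_cons_cons] at hdd
      simp only [Fin.val_zero, List.insertIdx_zero, noDD_cons_cons 0, noDD_cons_cons _ b,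
        listDes_cons_cons, startsDesc_cons]
      simp only [hs, hb, hn, decide_true, Bool.true_and] at hdd ⊢
      simp [hdd]

/-- `Tpcnt (n + 1) k` as a sum over the insertions into simsun permutations of rank `n`. -/
lemma Tpcnt_succ (n : ℕ) (k : ℤ) :
    Tpcnt (n + 1) k = ∑ π ∈ RB n, ∑ s : Bool, ∑ p : Fin (n + 1),
      (if noDD (word (insertTop p s π)) = true ∧ ¬ IsEvenSigned (insertTop p s π) ∧
          FirstPos (insertTop p s π) then
        (fun d : ℕ => if (d : ℤ) = k then (1 : ℤ) else 0) (desB (insertTop p s π)) else 0) := by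
  have h1 : Tpcnt (n + 1) k = ∑ ρ : SignedPerm (n + 1),
      if IsSimsun ρ ∧ ¬ IsEvenSigned ρ ∧ FirstPos ρ ∧ (desB ρ : ℤ) = k then (1 : ℤ) else 0 := by
    rw [Finset.sum_boole]
    simp only [Tpcnt, RTp, RT, RB, Finset.filter_filter, FirstPos, and_assoc]
    congr!
  rw [h1, ← (insertTop_bijective n).sum_comp, Fintype.sum_prod_type_right, RB, Finset.sum_filter]
  refine Finset.sum_congr rfl fun π _ => ?_
  rw [Fintype.sum_prod_type_right]
  simp only [isSimsun_insertTop]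
  by_cases h : IsSimsun π
  · simp only [h, true_and, if_true]
    refine Finset.sum_congr rfl fun s _ => Finset.sum_congr rfl fun p _ => ?_
    rw [← ite_and]
    simp only [and_assoc]
  · simp [h]

/-- For all integers `n ≥ 1`, `k ≥ 0`:
`T⁺(n,k) = k·R⁺(n−1,k) + (n−2k+1)·R⁺(n−1,k−1) + T(n−1,k)`. -/
theorem stmt8 (n : ℕ) (hn : 1 ≤ n) (k : ℤ) (hk : 0 ≤ k) :
    Tpcnt n k =
      k * Rpcnt (n - 1) k + ((n : ℤ) - 2 * k + 1) * Rpcnt (n - 1) (k - 1) +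
        Tcnt (n - 1) k := by
  obtain ⟨n, rfl⟩ : ∃ m, n = m + 1 := ⟨n - 1, by omega⟩
  rw [Nat.add_sub_cancel, Tpcnt_succ]
  have h1 : ∀ j, Rpcnt n j =
      ∑ π ∈ RB n, if FirstPos π then (if (desB π : ℤ) = j then (1 : ℤ) else 0) else 0 := by
    intro j
    simp only [Rpcnt, RBp, Finset.filter_filter, ← ite_and]
    rw [Finset.sum_boole]
    rfl
  have h2 : Tcnt n k =
      ∑ π ∈ RB n, if ¬ IsEvenSigned π then (if (desB π : ℤ) = k then (1 : ℤ) else 0) else 0 := by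
    simp only [Tcnt, RT, Finset.filter_filter, ← ite_and]
    rw [Finset.sum_boole]
  rw [h1, h1, h2, Finset.mul_sum, Finset.mul_sum, ← Finset.sum_add_distrib,
    ← Finset.sum_add_distrib]
  refine Finset.sum_congr rfl fun π hπ => ?_
  rw [sum_insertTop π (Finset.mem_filter.1 hπ).2
    (fun d : ℕ => if (d : ℤ) = k then (1 : ℤ) else 0)]
  congr 1
  by_cases hp : FirstPos π
  · simp only [hp, if_true]
    push_cast
    congr 1
    · split
      · next h => rw [h]
      · simp
    · by_cases h : (desB π : ℤ) + 1 = k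
      · have h' : (desB π : ℤ) = k - 1 := by omega
        rw [if_pos h, if_pos h', h']
        ring
      · have h' : ¬ (desB π : ℤ) = k - 1 := by omega
        rw [if_neg h, if_neg h']
        simp
  · simp [hp]
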